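/- Let λ > 0 and q₋ < x₀ < 0. The families (C_ε)_{ε>0} and (D_ε)_{ε>0} are asymptotically equivalent as ε → 0⁺, where C_ε = {τ_ε < ∞ and X_ε(τ_ε) = 0} and D_ε = {there exists t ≥ 0 with X_ε(t) = 0}. -/

import Mathlib

/-!
With the horizon `T = 1/(2λ)` and the clock `r(t) = (1 - e^{-2λt})/(2λ)`, the process `X_ε` is at
`y` at time `t` exactly when `B(r) = -x₀/ε + (y √(2λ)/ε) √(T - r)`, since `e^{-λt} = √(2λ (T - r))`.
So hitting `0` means that `B` reaches the level `-x₀/ε` before time `T`, whose probability is at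
least `P(B(T) > -x₀/ε)`, roughly `exp(-λx₀²/ε²)`. If `X_ε` hits `0` but does not exit there, it
reaches `q₋` first and `0` later: `B` touches the parabola `-x₀/ε - u √(T - r)` with
`u = |q₋| √(2λ)/ε`, and then the level `-x₀/ε`. By reflection this has probability at most twice
that of an increment of variance `T - r` exceeding `u √(T - r)`, hence at most
`2 exp(-u²/2) = 2 exp(-λq₋²/ε²)`, which is negligible because `|x₀| < |q₋|`.
-/

open MeasureTheory ProbabilityTheory Filter Topology Set

/-- `B` is a standard Brownian motion (for times `t ≥ 0`) on the probability space `(Ω, P)`. -/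
def IsBrownianMotion {Ω : Type*} [MeasurableSpace Ω] (P : Measure Ω) (B : ℝ → Ω → ℝ) : Prop :=
  (∀ t : ℝ, Measurable (B t)) ∧
  (∀ᵐ ω ∂P, B 0 ω = 0 ∧ ContinuousOn (fun t => B t ω) (Set.Ici (0 : ℝ))) ∧
  (∀ s t : ℝ, 0 ≤ s → s ≤ t →
    Measure.map (fun ω => B t ω - B s ω) P = gaussianReal 0 (Real.toNNReal (t - s))) ∧
  (∀ t : ℕ → ℝ, Monotone t → (∀ i, 0 ≤ t i) →
    iIndepFun (fun i ω => B (t (i + 1)) ω - B (t i) ω) P)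

/-- Families of events `(A_ε)` and `(B_ε)` are asymptotically equivalent as `ε → 0⁺` if
`P(A_ε) > 0` for all sufficiently small `ε > 0` and `P(A_ε Δ B_ε)/P(A_ε) → 0` as `ε → 0⁺`. -/
def AsympEquivalent {Ω : Type*} [MeasurableSpace Ω] (P : Measure Ω)
    (A B : ℝ → Set Ω) : Prop :=
  (∀ᶠ ε in 𝓝[>] (0 : ℝ), 0 < P (A ε)) ∧
  Tendsto (fun ε : ℝ => (P (symmDiff (A ε) (B ε))).toReal / (P (A ε)).toReal)
    (𝓝[>] 0) (𝓝 0)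

open scoped NNReal ENNReal

section FirstOccurrence

variable {ι Ω : Type*} [LinearOrder ι] {I : Finset ι} {A R : ι → Set Ω}

/-- The event that `i` is the least index in `I` at which one of the events `A` occurs, provided
`i ∈ I`. It plays the role of the event `{τ = i}` for the first time `τ` at which `A` occurs. -/
def firstOccurrence (I : Finset ι) (A : ι → Set Ω) (i : ι) : Set Ω :=
  A i ∩ ⋂ j ∈ I, ⋂ (_ : j < i), (A j)ᶜ

lemma mem_firstOccurrence {i : ι} {ω : Ω} :
    ω ∈ firstOccurrence I A i ↔ ω ∈ A i ∧ ∀ j ∈ I, j < i → ω ∉ A j := by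
  simp [firstOccurrence]

lemma pairwiseDisjoint_firstOccurrence :
    (I : Set ι).PairwiseDisjoint (firstOccurrence I A) := by
  intro i hi j hj hij
  refine Set.disjoint_left.2 fun ω hωi hωj => ?_
  rw [mem_firstOccurrence] at hωi hωj
  rcases hij.lt_or_gt with h | h
  · exact hωj.2 i hi h hωi.1
  · exact hωi.2 j hj h hωj.1

lemma exists_le_mem_firstOccurrence {i : ι} {ω : Ω} (hi : i ∈ I) (hω : ω ∈ A i) :
    ∃ k ∈ I, k ≤ i ∧ ω ∈ firstOccurrence I A k := by
  obtain ⟨k, hki, hk⟩ := (I.finite_toSet.sep (ω ∈ A ·)).exists_le_minimal (a := i) ⟨hi, hω⟩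
  exact ⟨k, hk.prop.1, hki,
    mem_firstOccurrence.2 ⟨hk.prop.2, fun j hj hjk hωj => hk.not_lt ⟨hj, hωj⟩ hjk⟩⟩

lemma biUnion_firstOccurrence : ⋃ i ∈ I, firstOccurrence I A i = ⋃ i ∈ I, A i := by
  refine subset_antisymm (iUnion₂_mono fun i _ => inter_subset_left) (iUnion₂_subset ?_)
  intro i hi ω hω
  obtain ⟨k, hk, -, hωk⟩ := exists_le_mem_firstOccurrence hi hω
  exact mem_biUnion hk hωk

variable {mΩ : MeasurableSpace Ω} {ℱ : Filtration ι mΩ} {𝒢 : ι → MeasurableSpace Ω}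
  {P : Measure Ω}

lemma measurableSet_firstOccurrence (hA : ∀ i ∈ I, MeasurableSet[ℱ i] (A i)) {i : ι}
    (hi : i ∈ I) : MeasurableSet[ℱ i] (firstOccurrence I A i) :=
  (hA i hi).inter <| Finset.measurableSet_biInter _ fun j hj =>
    MeasurableSet.iInter fun hji => (ℱ.mono hji.le _ (hA j hj)).compl

lemma measure_biUnion_firstOccurrence (hA : ∀ i ∈ I, MeasurableSet[ℱ i] (A i)) :
    P (⋃ i ∈ I, A i) = ∑ i ∈ I, P (firstOccurrence I A i) := by
  rw [← biUnion_firstOccurrence, measure_biUnion_finset pairwiseDisjoint_firstOccurrence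
    fun i hi => ℱ.le i _ (measurableSet_firstOccurrence hA hi)]

lemma measure_biUnion_firstOccurrence_inter (hA : ∀ i ∈ I, MeasurableSet[ℱ i] (A i))
    (h𝒢 : ∀ i, 𝒢 i ≤ mΩ)
    (hR : ∀ i ∈ I, MeasurableSet[𝒢 i] (R i)) (hind : ∀ i ∈ I, Indep (ℱ i) (𝒢 i) P) :
    P (⋃ i ∈ I, firstOccurrence I A i ∩ R i) = ∑ i ∈ I, P (firstOccurrence I A i) * P (R i) := by
  rw [measure_biUnion_finset
    (pairwiseDisjoint_firstOccurrence.mono fun i => inter_subset_left)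
    fun i hi => (ℱ.le i _ (measurableSet_firstOccurrence hA hi)).inter
      (h𝒢 i _ (hR i hi))]
  exact Finset.sum_congr rfl fun i hi =>
    (Indep_iff _ _ _).1 (hind i hi) _ _ (measurableSet_firstOccurrence hA hi) (hR i hi)

lemma measure_biUnion_mul_le_firstOccurrence_inter {c : ℝ≥0∞}
    (hA : ∀ i ∈ I, MeasurableSet[ℱ i] (A i)) (h𝒢 : ∀ i, 𝒢 i ≤ mΩ)
    (hR : ∀ i ∈ I, MeasurableSet[𝒢 i] (R i)) (hind : ∀ i ∈ I, Indep (ℱ i) (𝒢 i) P)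
    (hc : ∀ i ∈ I, c ≤ P (R i)) :
    P (⋃ i ∈ I, A i) * c ≤ P (⋃ i ∈ I, firstOccurrence I A i ∩ R i) := by
  rw [measure_biUnion_firstOccurrence_inter hA h𝒢 hR hind, measure_biUnion_firstOccurrence hA,
    Finset.sum_mul]
  gcongr with i hi
  exact hc i hi

lemma measure_biUnion_firstOccurrence_inter_le_mul {c : ℝ≥0∞}
    (hA : ∀ i ∈ I, MeasurableSet[ℱ i] (A i)) (h𝒢 : ∀ i, 𝒢 i ≤ mΩ)
    (hR : ∀ i ∈ I, MeasurableSet[𝒢 i] (R i)) (hind : ∀ i ∈ I, Indep (ℱ i) (𝒢 i) P)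
    (hc : ∀ i ∈ I, P (R i) ≤ c) :
    P (⋃ i ∈ I, firstOccurrence I A i ∩ R i) ≤ P (⋃ i ∈ I, A i) * c := by
  rw [measure_biUnion_firstOccurrence_inter hA h𝒢 hR hind, measure_biUnion_firstOccurrence hA,
    Finset.sum_mul]
  gcongr with i hi
  exact hc i hi

end FirstOccurrence

section TwoBarriers

variable {ι Ω : Type*} [LinearOrder ι] {mΩ : MeasurableSpace Ω} {ℱ : Filtration ι mΩ}
  {P : Measure Ω}

/- Completed crossings end with a nonnegative future increment with probability at least `c`; on
that event, the increment from the first visit below `g` to the end exceeds `h - g`. Stopping at the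
first crossing and then at the first visit below `g` replaces optional stopping. -/
theorem measure_exists_below_then_above_mul_le [IsProbabilityMeasure P] {I : Finset ι}
    {S : ι → Ω → ℝ} {Z : Ω → ℝ} (hS : Adapted ℱ S) (hZ : Measurable Z)
    (hind : ∀ i ∈ I, Indep (ℱ i) (MeasurableSpace.comap (fun ω => Z ω - S i ω) inferInstance) P)
    {g h : ι → ℝ} (hh : MonotoneOn h I) {c p : ℝ≥0∞}
    (hc : ∀ i ∈ I, c ≤ P {ω | 0 ≤ Z ω - S i ω})
    (hp : ∀ i ∈ I, P {ω | h i - g i < Z ω - S i ω} ≤ p) :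
    P {ω | ∃ i ∈ I, ∃ j ∈ I, i < j ∧ S i ω < g i ∧ h j < S j ω} * c ≤ p := by
  let U : ι → Set Ω := fun i => {ω | S i ω < g i}
  let V : ι → Set Ω := fun j => {ω | h j < S j ω} ∩ ⋃ i ∈ I, ⋃ (_ : i < j), U i
  have hU : ∀ i ∈ I, MeasurableSet[ℱ i] (U i) := fun i _ =>
    measurableSet_lt (hS i) measurable_const
  have hV : ∀ j ∈ I, MeasurableSet[ℱ j] (V j) := fun j _ =>
    (measurableSet_lt measurable_const (hS j)).inter <| Finset.measurableSet_biUnion _ fun i hi =>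
      MeasurableSet.iUnion fun hij => ℱ.mono hij.le _ (hU i hi)
  let 𝒢 : ι → MeasurableSpace Ω := fun i =>
    MeasurableSpace.comap (fun ω => Z ω - S i ω) inferInstance
  have h𝒢 : ∀ i, 𝒢 i ≤ mΩ := fun i => (hZ.sub ((hS i).mono (ℱ.le i) le_rfl)).comap_le
  calc P {ω | ∃ i ∈ I, ∃ j ∈ I, i < j ∧ S i ω < g i ∧ h j < S j ω} * c
    _ ≤ P (⋃ j ∈ I, V j) * c := by
      gcongr
      rintro ω ⟨i, hi, j, hj, hij, hωi, hωj⟩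
      exact mem_biUnion hj ⟨hωj, mem_iUnion₂.2 ⟨i, hi, mem_iUnion.2 ⟨hij, hωi⟩⟩⟩
    _ ≤ P (⋃ j ∈ I, firstOccurrence I V j ∩ {ω | Z ω - S j ω ∈ Ici 0}) :=
      measure_biUnion_mul_le_firstOccurrence_inter hV h𝒢
        (fun _ _ => ⟨Ici 0, measurableSet_Ici, rfl⟩) hind hc
    _ ≤ P (⋃ i ∈ I, firstOccurrence I U i ∩ {ω | Z ω - S i ω ∈ Ioi (h i - g i)}) := by
      refine measure_mono (iUnion₂_subset fun j hj ω ⟨hωV, hωZ⟩ => ?_)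
      obtain ⟨hωj, hωU⟩ := (mem_firstOccurrence.1 hωV).1
      simp only [mem_iUnion] at hωU
      obtain ⟨i, hi, hij, hωi⟩ := hωU
      obtain ⟨k, hk, hki, hωk⟩ := exists_le_mem_firstOccurrence hi hωi
      refine mem_biUnion hk ⟨hωk, ?_⟩
      have hhkj : h k ≤ h j := hh hk hj (hki.trans hij.le)
      have hωUk : S k ω < g k := (mem_firstOccurrence.1 hωk).1
      simp only [mem_ofPred_eq, mem_Ici, mem_Ioi] at hωj hωZ ⊢
      linarith
    _ ≤ P (⋃ i ∈ I, U i) * p :=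
      measure_biUnion_firstOccurrence_inter_le_mul hU h𝒢
        (fun i _ => ⟨Ioi (h i - g i), measurableSet_Ioi, rfl⟩) hind hp
    _ ≤ p := mul_le_of_le_one_left' prob_le_one

end TwoBarriers

section Gaussian

lemma inv_two_le_measure_Ici_zero {E : Type*} [AddCommGroup E] [LinearOrder E]
    [IsOrderedAddMonoid E] [MeasurableSpace E] [MeasurableNeg E] (μ : Measure E)
    [IsProbabilityMeasure μ] [μ.IsNegInvariant] : 2⁻¹ ≤ μ (Ici 0) := by
  have hIic : μ (Iic 0) = μ (Ici 0) := by
    rw [← μ.measure_neg (Ici 0), neg_Ici, neg_zero]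
  rw [ENNReal.inv_le_iff_le_mul (by simp) (by simp)]
  calc 1 = μ (Iic 0 ∪ Ici 0) := by rw [Iic_union_Ici, measure_univ]
    _ ≤ μ (Iic 0) + μ (Ici 0) := measure_union_le _ _
    _ = 2 * μ (Ici 0) := by rw [hIic, two_mul]

instance isNegInvariant_gaussianReal_zero (v : ℝ≥0) : (gaussianReal 0 v).IsNegInvariant where
  neg_eq_self := by simpa [Measure.neg, ← Pi.neg_def] using gaussianReal_map_neg (μ := 0) (v := v)

lemma hasSubgaussianMGF_id_gaussianReal_zero (v : ℝ≥0) :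
    HasSubgaussianMGF id v (gaussianReal 0 v) where
  integrable_exp_mul := integrable_exp_mul_gaussianReal
  mgf_le t := by simp [mgf_id_gaussianReal]

lemma gaussianReal_zero_Ioi_mul_sqrt_le (v : ℝ≥0) {c : ℝ} (hc : 0 ≤ c) :
    gaussianReal 0 v (Ioi (c * √v)) ≤ ENNReal.ofReal (Real.exp (-c ^ 2 / 2)) := by
  rcases eq_or_ne v 0 with rfl | hv
  · simp
  calc gaussianReal 0 v (Ioi (c * √v)) ≤ gaussianReal 0 v (Ici (c * √v)) :=
        measure_mono Ioi_subset_Ici_self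
    _ ≤ ENNReal.ofReal (Real.exp (-(c * √v) ^ 2 / (2 * v))) :=
        (ENNReal.le_ofReal_iff_toReal_le (measure_ne_top _ _) (Real.exp_pos _).le).2
          ((hasSubgaussianMGF_id_gaussianReal_zero v).measure_ge_le (by positivity))
    _ = ENNReal.ofReal (Real.exp (-c ^ 2 / 2)) := by
        rw [mul_pow, Real.sq_sqrt v.coe_nonneg]
        field_simp

lemma mul_gaussianPDF_le_gaussianReal_Ioi {μ : ℝ} {v : ℝ≥0} (hv : v ≠ 0) {c d : ℝ} (hc : μ ≤ c) :
    ENNReal.ofReal (d - c) * gaussianPDF μ v d ≤ gaussianReal μ v (Ioi c) := by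
  calc ENNReal.ofReal (d - c) * gaussianPDF μ v d = ∫⁻ _ in Ioc c d, gaussianPDF μ v d := by
        rw [setLIntegral_const, Real.volume_Ioc, mul_comm]
    _ ≤ ∫⁻ x in Ioc c d, gaussianPDF μ v x := by
        refine setLIntegral_mono (measurable_gaussianPDF μ v) fun x hx => ?_
        have hμx : 0 ≤ x - μ := sub_nonneg.2 (hc.trans hx.1.le)
        have hxd : x ≤ d := hx.2
        unfold gaussianPDF gaussianPDFReal
        gcongr
    _ = gaussianReal μ v (Ioc c d) := (gaussianReal_apply μ hv _).symm
    _ ≤ gaussianReal μ v (Ioi c) := measure_mono Ioc_subset_Ioi_self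

lemma le_gaussianReal_zero_Ioi_div {v : ℝ≥0} (hv : v ≠ 0) {c d ε : ℝ} (hc : 0 ≤ c) (hcd : c ≤ d)
    (hε : 0 < ε) (hε1 : ε ≤ 1) :
    (d - c) * (√(2 * Real.pi * v))⁻¹ * Real.exp (-(d ^ 2 / (2 * v)) / ε ^ 2)
      ≤ (gaussianReal 0 v).real (Ioi (c / ε)) := by
  have hdc : 0 ≤ d - c := sub_nonneg.2 hcd
  calc (d - c) * (√(2 * Real.pi * v))⁻¹ * Real.exp (-(d ^ 2 / (2 * v)) / ε ^ 2)
    _ ≤ (d - c) / ε * (√(2 * Real.pi * v))⁻¹ * Real.exp (-(d ^ 2 / (2 * v)) / ε ^ 2) := by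
      gcongr
      exact le_div_self hdc hε hε1
    _ = (d / ε - c / ε) * gaussianPDFReal 0 v (d / ε) := by
      rw [gaussianPDFReal, ← sub_div, sub_zero, div_pow, mul_assoc]
      congr 3
      field_simp
    _ ≤ (gaussianReal 0 v).real (Ioi (c / ε)) := by
      refine (ENNReal.ofReal_le_iff_le_toReal (measure_ne_top _ _)).1 ?_
      rw [ENNReal.ofReal_mul (sub_nonneg.2 (by gcongr))]
      exact mul_gaussianPDF_le_gaussianReal_Ioi hv (by positivity)

end Gaussian

section Brownian

lemma exists_below_then_above_of_dense {E : Type*} [TopologicalSpace E] [LinearOrder E]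
    [OrderTopology E] [DenselyOrdered E] {D : Set E} (hD : Dense D) {f g h : E → ℝ}
    (hf : Continuous f) (hg : Continuous g) (hh : Continuous h) {s t T : E} (hst : s < t)
    (htT : t < T) (hs : f s < g s) (ht : h t < f t) :
    ∃ q ∈ D, ∃ r ∈ D, q < r ∧ r < T ∧ f q < g q ∧ h r < f r := by
  obtain ⟨m, hsm, hmt⟩ := exists_between hst
  obtain ⟨q, ⟨hqfg, hqm⟩, hqD⟩ :=
    hD.inter_open_nonempty _ ((isOpen_lt hf hg).inter isOpen_Iio) ⟨s, hs, hsm⟩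
  obtain ⟨r, ⟨hrhf, hmr, hrT⟩, hrD⟩ :=
    hD.inter_open_nonempty _ ((isOpen_lt hh hf).inter isOpen_Ioo) ⟨t, ht, hmt, htT⟩
  exact ⟨q, hqD, r, hrD, hqm.trans hmr, hrT, hqfg, hrhf⟩

variable {Ω : Type*} {mΩ : MeasurableSpace Ω} {P : Measure Ω} {W : ℝ≥0 → Ω → ℝ}

lemma measure_increment_mem_of_isPreBrownianReal (hW : IsPreBrownianReal W P) {s t : ℝ≥0}
    (hst : s ≤ t) {A : Set ℝ} (hA : MeasurableSet A) :
    P {ω | W t ω - W s ω ∈ A} = gaussianReal 0 (t - s) A := by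
  have hdist : nndist (t : ℝ) s = t - s := by
    rw [← NNReal.coe_inj, coe_nndist, Real.dist_eq, NNReal.coe_sub hst,
      abs_of_nonneg (sub_nonneg.2 (NNReal.coe_le_coe.2 hst))]
  have hlaw : HasLaw (W t - W s) (gaussianReal 0 (t - s)) P := hdist ▸ hW.hasLaw_sub t s
  exact hlaw.measure_eq hA

lemma indep_natural_increment_of_isPreBrownianReal (hW : IsPreBrownianReal W P)
    (hWm : ∀ t, StronglyMeasurable (W t)) {s t : ℝ≥0} (hst : s ≤ t) :
    Indep (Filtration.natural W hWm s)
      (MeasurableSpace.comap (fun ω => W t ω - W s ω) inferInstance) P := by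
  have hpast : IndepFun (fun ω (r : Iic s) => W r ω) (fun ω => W t ω - W s ω) P := by
    simpa [Function.comp_def, add_tsub_cancel_of_le hst] using
      (hW.indepFun_shift s).symm.comp measurable_id (measurable_pi_apply (t - s))
  rw [Filtration.natural_eq_comap]
  exact (IndepFun_iff_Indep _ _ _).1 hpast

theorem measure_exists_mem_below_then_above_le_of_isPreBrownianReal (hW : IsPreBrownianReal W P)
    (hWm : ∀ t, StronglyMeasurable (W t)) {T : ℝ≥0} {I : Finset ℝ≥0} (hIT : ∀ t ∈ I, t < T)
    {g h : ℝ≥0 → ℝ} (hh : MonotoneOn h I) {p : ℝ≥0∞}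
    (hp : ∀ t ∈ I, gaussianReal 0 (T - t) (Ioi (h t - g t)) ≤ p) :
    P {ω | ∃ s ∈ I, ∃ t ∈ I, s < t ∧ W s ω < g s ∧ h t < W t ω} ≤ 2 * p := by
  have : IsProbabilityMeasure P := hW.isGaussianProcess.isProbabilityMeasure
  have hincr : ∀ t ∈ I, ∀ A, MeasurableSet A →
      P {ω | W T ω - W t ω ∈ A} = gaussianReal 0 (T - t) A := fun t ht A hA =>
    measure_increment_mem_of_isPreBrownianReal hW (hIT t ht).le hA
  have hmul := measure_exists_below_then_above_mul_le (c := 2⁻¹) (p := p)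
    (fun t => (Filtration.stronglyAdapted_natural hWm t).measurable) (hWm T).measurable
    (fun t ht => indep_natural_increment_of_isPreBrownianReal hW hWm (hIT t ht).le) hh
    (fun t ht => (inv_two_le_measure_Ici_zero _).trans_eq (hincr t ht _ measurableSet_Ici).symm)
    (fun t ht => (hincr t ht _ measurableSet_Ioi).trans_le (hp t ht))
  rwa [← div_eq_mul_inv, ENNReal.div_le_iff_le_mul (by simp) (by simp), mul_comm] at hmul

theorem measure_exists_below_then_above_le_of_isBrownianReal (hW : IsBrownianReal W P)
    (hWm : ∀ t, StronglyMeasurable (W t)) {T : ℝ≥0} {g h : ℝ≥0 → ℝ} (hg : Continuous g)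
    (hh : Continuous h) (hhm : Monotone h) {p : ℝ≥0∞}
    (hp : ∀ t < T, gaussianReal 0 (T - t) (Ioi (h t - g t)) ≤ p) :
    P {ω | ∃ s t, s < t ∧ t < T ∧ W s ω < g s ∧ h t < W t ω} ≤ 2 * p := by
  let I : ℕ → Finset ℝ≥0 := fun n =>
    ((Finset.range n).image (TopologicalSpace.denseSeq ℝ≥0)).filter (· < T)
  let F : ℕ → Set Ω := fun n =>
    {ω | ∃ s ∈ I n, ∃ t ∈ I n, s < t ∧ W s ω < g s ∧ h t < W t ω}
  have hI : Monotone I := fun m n hmn => by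
    dsimp only [I]
    gcongr
  have hF : Monotone F := fun m n hmn ω ⟨s, hs, t, ht, hst⟩ => ⟨s, hI hmn hs, t, hI hmn ht, hst⟩
  have hIT : ∀ n, ∀ t ∈ I n, t < T := fun n t ht => (Finset.mem_filter.1 ht).2
  have hFle : ∀ n, P (F n) ≤ 2 * p := fun n =>
    measure_exists_mem_below_then_above_le_of_isPreBrownianReal hW.toIsPreBrownianReal hWm
      (hIT n) (hhm.monotoneOn _) fun t ht => hp t (hIT n t ht)
  have hIunion : ∀ s ∈ range (TopologicalSpace.denseSeq ℝ≥0), s < T → ∃ n, s ∈ I n := by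
    rintro _ ⟨n, rfl⟩ hsT
    exact ⟨n + 1, Finset.mem_filter.2
      ⟨Finset.mem_image_of_mem _ (Finset.self_mem_range_succ n), hsT⟩⟩
  calc P {ω | ∃ s t, s < t ∧ t < T ∧ W s ω < g s ∧ h t < W t ω}
    _ ≤ P (⋃ n, F n) := measure_mono_ae <| by
      filter_upwards [hW.cont] with ω hω ⟨s, t, hst, htT, hs, ht⟩
      obtain ⟨q, hq, r, hr, hqr, hrT, hqg, hrh⟩ := exists_below_then_above_of_dense
        (TopologicalSpace.denseRange_denseSeq ℝ≥0) hω hg hh hst htT hs ht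
      obtain ⟨m, hm⟩ := hIunion q hq (hqr.trans hrT)
      obtain ⟨n, hn⟩ := hIunion r hr hrT
      exact mem_iUnion.2 ⟨max m n, q, hI (le_max_left m n) hm, r, hI (le_max_right m n) hn,
        hqr, hqg, hrh⟩
    _ = ⨆ n, P (F n) := hF.measure_iUnion
    _ ≤ 2 * p := iSup_le hFle

end Brownian

section Horizon

variable {Ω : Type*} {mΩ : MeasurableSpace Ω} {P : Measure Ω} {W : ℝ≥0 → Ω → ℝ}

theorem measure_exists_le_sub_mul_sqrt_then_ge_le (hW : IsBrownianReal W P)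
    (hWm : ∀ t, StronglyMeasurable (W t)) (T : ℝ≥0) (b : ℝ) {u : ℝ} (hu : 0 < u) :
    P {ω | ∃ s t, s < t ∧ t < T ∧ W s ω ≤ b - u * √(T - s) ∧ b ≤ W t ω}
      ≤ 2 * ENNReal.ofReal (Real.exp (-u ^ 2 / 2)) := by
  -- Moving both barriers by `δ √(T - ·)` makes the inequalities strict, hence open in time.
  have hδ : ∀ δ ∈ Ioo 0 (u / 2),
      P {ω | ∃ s t, s < t ∧ t < T ∧ W s ω ≤ b - u * √(T - s) ∧ b ≤ W t ω}
        ≤ 2 * ENNReal.ofReal (Real.exp (-(u - 2 * δ) ^ 2 / 2)) := by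
    rintro δ ⟨hδ0, hδu⟩
    have hsqrt : ∀ t < T, 0 < √((T : ℝ) - t) := fun t ht =>
      Real.sqrt_pos.2 (sub_pos.2 (NNReal.coe_lt_coe.2 ht))
    calc P {ω | ∃ s t, s < t ∧ t < T ∧ W s ω ≤ b - u * √(T - s) ∧ b ≤ W t ω}
      _ ≤ P {ω | ∃ s t, s < t ∧ t < T ∧ W s ω < b - (u - δ) * √(T - s) ∧
            b - δ * √(T - t) < W t ω} := by
        refine measure_mono ?_
        rintro ω ⟨s, t, hst, htT, hs, ht⟩
        have hs' := mul_pos hδ0 (hsqrt s (hst.trans htT))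
        have ht' := mul_pos hδ0 (hsqrt t htT)
        exact ⟨s, t, hst, htT, by linarith, by linarith⟩
      _ ≤ 2 * ENNReal.ofReal (Real.exp (-(u - 2 * δ) ^ 2 / 2)) := by
        refine measure_exists_below_then_above_le_of_isBrownianReal hW hWm
          (g := fun s => b - (u - δ) * √(T - s)) (h := fun t => b - δ * √(T - t))
          (by fun_prop) (by fun_prop) (fun s t hst => ?_) fun t htT => ?_
        · dsimp only
          gcongr
        · convert gaussianReal_zero_Ioi_mul_sqrt_le (T - t)
            (show 0 ≤ u - 2 * δ by linarith) using 3
          rw [NNReal.coe_sub htT.le]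
          ring
  have hlim : Tendsto (fun δ : ℝ => 2 * ENNReal.ofReal (Real.exp (-(u - 2 * δ) ^ 2 / 2)))
      (𝓝[>] 0) (𝓝 (2 * ENNReal.ofReal (Real.exp (-(u - 2 * 0) ^ 2 / 2)))) := by
    refine ENNReal.Tendsto.const_mul (ENNReal.tendsto_ofReal ?_) (by simp)
    exact (Continuous.tendsto (by fun_prop) 0).mono_left nhdsWithin_le_nhds
  rw [mul_zero, sub_zero] at hlim
  exact ge_of_tendsto hlim (mem_of_superset (Ioo_mem_nhdsGT (half_pos hu)) hδ)

end Horizon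

section BrownianMotion

variable {Ω : Type*} [MeasurableSpace Ω] {P : Measure Ω} {B : ℝ → Ω → ℝ}

lemma IsBrownianMotion.hasLaw (hB : IsBrownianMotion P B) (t : ℝ≥0) :
    HasLaw (B t) (gaussianReal 0 t) P where
  aemeasurable := (hB.1 t).aemeasurable
  map_eq := by
    have hincr := hB.2.2.1 0 t le_rfl t.coe_nonneg
    rw [sub_zero, Real.toNNReal_coe] at hincr
    rw [← hincr]
    refine Measure.map_congr ?_
    filter_upwards [hB.2.1] with ω hω
    rw [hω.1, sub_zero]

lemma IsBrownianMotion.hasIndepIncrements (hB : IsBrownianMotion P B) :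
    HasIndepIncrements (fun t : ℝ≥0 => B t) P :=
  .of_nat fun t ht _ => hB.2.2.2 (fun i => t i) (NNReal.coe_mono.comp ht) fun i => (t i).coe_nonneg

lemma IsBrownianMotion.isBrownianReal (hB : IsBrownianMotion P B) :
    IsBrownianReal (fun t : ℝ≥0 => B t) P where
  toIsPreBrownianReal := hB.hasIndepIncrements.isPreBrownianReal_of_hasLaw hB.hasLaw
  cont := by
    filter_upwards [hB.2.1] with ω hω
    exact hω.2.comp_continuous NNReal.continuous_coe fun t => t.coe_nonneg

end BrownianMotion

section ExitTimes

variable {E : Type*} {f : ℝ → E} {a b : E}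

/-- The times `t ≥ 0` at which the path `f` is at one of the points `a`, `b`. The exit time of a
real path from the interval `(a, b)` is the infimum of this set if the path starts in `[a, b]`. -/
def exitTimes (f : ℝ → E) (a b : E) : Set ℝ := {t | 0 ≤ t ∧ (f t = a ∨ f t = b)}

lemma isClosed_exitTimes [TopologicalSpace E] [T1Space E] (hf : ContinuousOn f (Ici 0)) :
    IsClosed (exitTimes f a b) :=
  hf.preimage_isClosed_of_isClosed isClosed_Ici (Set.toFinite {a, b}).isClosed

lemma sInf_exitTimes_mem [TopologicalSpace E] [T1Space E] (hf : ContinuousOn f (Ici 0))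
    (hne : (exitTimes f a b).Nonempty) : sInf (exitTimes f a b) ∈ exitTimes f a b :=
  (isClosed_exitTimes hf).csInf_mem hne ⟨0, fun _ ht => ht.1⟩

lemma exists_lt_eq_of_apply_sInf_exitTimes_ne [TopologicalSpace E] [T1Space E]
    (hf : ContinuousOn f (Ici 0)) {t : ℝ} (ht : 0 ≤ t) (htb : f t = b)
    (hne : f (sInf (exitTimes f a b)) ≠ b) : ∃ s, 0 ≤ s ∧ s < t ∧ f s = a := by
  have ht_mem : t ∈ exitTimes f a b := ⟨ht, .inr htb⟩
  obtain ⟨h0, hfa | hfb⟩ := sInf_exitTimes_mem hf ⟨t, ht_mem⟩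
  · have hle : sInf (exitTimes f a b) ≤ t := csInf_le ⟨0, fun _ hs => hs.1⟩ ht_mem
    exact ⟨_, h0, hle.lt_of_ne fun heq => hne (heq ▸ htb), hfa⟩
  · exact absurd hfb hne

end ExitTimes

section TimeChange

/-- The clock `t ↦ ∫₀ᵗ e^{-2λs} ds`, i.e. the quadratic variation of `∫₀ᵗ e^{-λs} dW(s)`. -/
noncomputable def timeChange (lam t : ℝ) : ℝ := (1 - Real.exp (-(2 * lam * t))) / (2 * lam)

variable {lam : ℝ}

lemma timeChange_zero (lam : ℝ) : timeChange lam 0 = 0 := by simp [timeChange]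

@[fun_prop]
lemma continuous_timeChange (lam : ℝ) : Continuous (timeChange lam) := by
  unfold timeChange
  fun_prop

lemma strictMono_timeChange (hlam : 0 < lam) : StrictMono (timeChange lam) := fun s t hst => by
  unfold timeChange
  gcongr

lemma timeChange_nonneg (hlam : 0 < lam) {t : ℝ} (ht : 0 ≤ t) : 0 ≤ timeChange lam t :=
  timeChange_zero lam ▸ (strictMono_timeChange hlam).monotone ht

lemma inv_sub_timeChange (hlam : 0 < lam) (t : ℝ) :
    (2 * lam)⁻¹ - timeChange lam t = Real.exp (-(lam * t)) ^ 2 / (2 * lam) := by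
  rw [timeChange, ← Real.exp_nat_mul]
  field_simp
  ring_nf

lemma timeChange_lt_inv (hlam : 0 < lam) (t : ℝ) : timeChange lam t < (2 * lam)⁻¹ := by
  rw [← sub_pos, inv_sub_timeChange hlam]
  positivity

lemma exp_neg_eq_sqrt_mul_sqrt_inv_sub_timeChange (hlam : 0 < lam) (t : ℝ) :
    Real.exp (-(lam * t)) = √(2 * lam) * √((2 * lam)⁻¹ - timeChange lam t) := by
  rw [← Real.sqrt_mul (by positivity), inv_sub_timeChange hlam,
    mul_div_cancel₀ _ (by positivity), Real.sqrt_sq (Real.exp_pos _).le]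

lemma exists_timeChange_eq (hlam : 0 < lam) {r : ℝ} (hr : r ∈ Ico 0 (2 * lam)⁻¹) :
    ∃ t, 0 ≤ t ∧ timeChange lam t = r := by
  have hlim : Tendsto (timeChange lam) atTop (𝓝 (2 * lam)⁻¹) := by
    have hexp := Real.tendsto_exp_neg_atTop_nhds_zero.comp
      (tendsto_id.const_mul_atTop (show 0 < 2 * lam by positivity))
    rw [← one_div, ← sub_zero 1]
    exact (hexp.const_sub 1).div_const (2 * lam)
  obtain ⟨u, hu0, hu⟩ :=
    ((eventually_ge_atTop 0).and (hlim.eventually (lt_mem_nhds hr.2))).exists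
  obtain ⟨t, ht, htr⟩ := intermediate_value_Icc hu0 (continuous_timeChange lam).continuousOn
    ⟨(timeChange_zero lam).trans_le hr.1, hu.le⟩
  exact ⟨t, ht.1, htr⟩

end TimeChange

section OUPath

/-- The path of the repelling Ornstein–Uhlenbeck process `dX = λ X dt + ε dW` from `x₀`, driven by
the path `w` run with the clock `timeChange lam`. -/
noncomputable def ouPath (lam x₀ ε : ℝ) (w : ℝ → ℝ) (t : ℝ) : ℝ :=
  Real.exp (lam * t) * (x₀ + ε * w (timeChange lam t))

variable {lam x₀ ε : ℝ} {w : ℝ → ℝ}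

lemma continuousOn_ouPath (hlam : 0 < lam) (hw : ContinuousOn w (Ici 0)) :
    ContinuousOn (ouPath lam x₀ ε w) (Ici 0) := by
  have hcomp : ContinuousOn (fun t => w (timeChange lam t)) (Ici 0) :=
    hw.comp (by fun_prop) fun t ht => timeChange_nonneg hlam ht
  exact (Continuous.continuousOn (by fun_prop)).mul (continuousOn_const.add (hcomp.const_mul ε))

lemma ouPath_eq_iff (hε : ε ≠ 0) {t y : ℝ} :
    ouPath lam x₀ ε w t = y ↔
      w (timeChange lam t) = -x₀ / ε + y / ε * Real.exp (-(lam * t)) := by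
  have hexp : Real.exp (lam * t) * Real.exp (-(lam * t)) = 1 := by
    rw [← Real.exp_add, add_neg_cancel, Real.exp_zero]
  rw [ouPath]
  constructor
  · rintro rfl
    field_simp
    linear_combination (-(x₀ + ε * w (timeChange lam t))) * hexp
  · intro h
    rw [h]
    field_simp
    linear_combination y * hexp

lemma ouPath_eq_zero_iff (hε : ε ≠ 0) {t : ℝ} :
    ouPath lam x₀ ε w t = 0 ↔ w (timeChange lam t) = -x₀ / ε := by
  rw [ouPath_eq_iff hε, zero_div, zero_mul, add_zero]

lemma exists_ouPath_eq_zero (hlam : 0 < lam) (hx₀ : x₀ ≤ 0) (hε : 0 < ε) (hw0 : w 0 = 0)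
    (hw : ContinuousOn w (Ici 0)) (hwT : -x₀ / ε < w (2 * lam)⁻¹) :
    ∃ t, 0 ≤ t ∧ ouPath lam x₀ ε w t = 0 := by
  obtain ⟨r, hr, hwr⟩ := intermediate_value_Ico (show 0 ≤ (2 * lam)⁻¹ by positivity)
    (hw.mono Icc_subset_Ici_self)
    ⟨hw0.trans_le (div_nonneg (neg_nonneg.2 hx₀) hε.le), hwT⟩
  obtain ⟨t, ht, rfl⟩ := exists_timeChange_eq hlam hr
  exact ⟨t, ht, (ouPath_eq_zero_iff hε.ne').2 hwr⟩

end OUPath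

section OUProcess

variable {Ω : Type*} [MeasurableSpace Ω] {P : Measure Ω} {B : ℝ → Ω → ℝ} {lam x₀ ε : ℝ}

theorem measure_exists_ouPath_eq_then_eq_zero_le (hB : IsBrownianMotion P B) (hlam : 0 < lam)
    {q : ℝ} (hq : q < 0) (hε : 0 < ε) :
    P {ω | ∃ s t, 0 ≤ s ∧ s < t ∧ ouPath lam x₀ ε (B · ω) s = q ∧
        ouPath lam x₀ ε (B · ω) t = 0}
      ≤ 2 * ENNReal.ofReal (Real.exp (-(lam * q ^ 2) / ε ^ 2)) := by
  have hu : 0 < -q * √(2 * lam) / ε := by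
    have := neg_pos.2 hq
    positivity
  have hbarrier := measure_exists_le_sub_mul_sqrt_then_ge_le hB.isBrownianReal
    (fun t => (hB.1 t).stronglyMeasurable) (2 * lam)⁻¹.toNNReal (-x₀ / ε) hu
  have hexponent : -(-q * √(2 * lam) / ε) ^ 2 / 2 = -(lam * q ^ 2) / ε ^ 2 := by
    rw [div_pow, mul_pow, Real.sq_sqrt (by positivity)]
    ring
  rw [hexponent, Real.coe_toNNReal _ (by positivity)] at hbarrier
  refine (measure_mono ?_).trans hbarrier
  rintro ω ⟨s, t, hs, hst, hsq, ht0⟩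
  have hclock : ∀ r, 0 ≤ r → ((timeChange lam r).toNNReal : ℝ) = timeChange lam r :=
    fun r hr => Real.coe_toNNReal _ (timeChange_nonneg hlam hr)
  refine ⟨(timeChange lam s).toNNReal, (timeChange lam t).toNNReal,
    (Real.toNNReal_lt_toNNReal_iff_of_nonneg (timeChange_nonneg hlam hs)).2
      (strictMono_timeChange hlam hst),
    (Real.toNNReal_lt_toNNReal_iff (by positivity)).2 (timeChange_lt_inv hlam t), ?_, ?_⟩
  · rw [hclock s hs, (ouPath_eq_iff hε.ne').1 hsq,
      exp_neg_eq_sqrt_mul_sqrt_inv_sub_timeChange hlam]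
    exact le_of_eq (by ring)
  · rw [hclock t (hs.trans hst.le), (ouPath_eq_zero_iff hε.ne').1 ht0]

theorem gaussianReal_Ioi_le_measure_hit_zero (hB : IsBrownianMotion P B)
    (hlam : 0 < lam) (hx₀ : x₀ ≤ 0) (hε : 0 < ε) :
    gaussianReal 0 (2 * lam)⁻¹.toNNReal (Ioi (-x₀ / ε))
      ≤ P {ω | ∃ t, 0 ≤ t ∧ ouPath lam x₀ ε (B · ω) t = 0} := by
  have hlaw := (hB.hasLaw (2 * lam)⁻¹.toNNReal).measure_eq
    (measurableSet_Ioi (a := -x₀ / ε))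
  rw [Real.coe_toNNReal _ (by positivity)] at hlaw
  refine hlaw.symm.trans_le (measure_mono_ae ?_)
  filter_upwards [hB.2.1] with ω ⟨hω0, hωc⟩ hωT
  exact exists_ouPath_eq_zero hlam hx₀ hε hω0 hωc hωT

lemma measureReal_hit_zero_diff_exit_at_zero_le (hB : IsBrownianMotion P B) (hlam : 0 < lam)
    {q : ℝ} (hq : q < 0) (hε : 0 < ε) :
    P.real ({ω | ∃ t, 0 ≤ t ∧ ouPath lam x₀ ε (B · ω) t = 0} \
        {ω | (exitTimes (ouPath lam x₀ ε (B · ω)) q 0).Nonempty ∧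
          ouPath lam x₀ ε (B · ω) (sInf (exitTimes (ouPath lam x₀ ε (B · ω)) q 0)) = 0})
      ≤ 2 * Real.exp (-(lam * q ^ 2) / ε ^ 2) := by
  refine ENNReal.toReal_le_of_le_ofReal (by positivity) ?_
  rw [ENNReal.ofReal_mul zero_le_two, ENNReal.ofReal_ofNat]
  refine (measure_mono_ae ?_).trans
    (measure_exists_ouPath_eq_then_eq_zero_le (x₀ := x₀) hB hlam hq hε)
  filter_upwards [hB.2.1] with ω ⟨_, hω⟩ ⟨⟨t, ht, hXt⟩, hexit⟩
  obtain ⟨s, hs, hst, hXs⟩ := exists_lt_eq_of_apply_sInf_exitTimes_ne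
    (continuousOn_ouPath hlam hω) ht hXt fun h => hexit ⟨⟨t, ht, .inr hXt⟩, h⟩
  exact ⟨s, t, hs, hst, hXs, hXt⟩

lemma le_measureReal_hit_zero [IsFiniteMeasure P] (hB : IsBrownianMotion P B) (hlam : 0 < lam)
    (hx₀ : x₀ ≤ 0) {d : ℝ} (hd : -x₀ ≤ d) (hε : 0 < ε) (hε1 : ε ≤ 1) :
    (d + x₀) * (√(Real.pi / lam))⁻¹ * Real.exp (-(lam * d ^ 2) / ε ^ 2)
      ≤ P.real {ω | ∃ t, 0 ≤ t ∧ ouPath lam x₀ ε (B · ω) t = 0} := by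
  have hv : (2 * lam)⁻¹.toNNReal ≠ 0 := (Real.toNNReal_pos.2 (by positivity)).ne'
  have hgauss := le_gaussianReal_zero_Ioi_div hv (neg_nonneg.2 hx₀) hd hε hε1
  have hnorm : 2 * Real.pi * (2 * lam)⁻¹ = Real.pi / lam := by field_simp
  have hrate : d ^ 2 / (2 * (2 * lam)⁻¹) = lam * d ^ 2 := by field_simp
  rw [Real.coe_toNNReal _ (by positivity), sub_neg_eq_add, hnorm, hrate] at hgauss
  exact hgauss.trans (ENNReal.toReal_mono (measure_ne_top _ _)
    (gaussianReal_Ioi_le_measure_hit_zero hB hlam hx₀ hε))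

end OUProcess

section Asymptotics

variable {Ω : Type*} [MeasurableSpace Ω] {P : Measure Ω} {C D : ℝ → Set Ω}

lemma tendsto_exp_neg_div_sq_nhdsNE_zero {γ : ℝ} (hγ : 0 < γ) :
    Tendsto (fun ε : ℝ => Real.exp (-γ / ε ^ 2)) (𝓝[≠] 0) (𝓝 0) := by
  have hsq : Tendsto (fun ε : ℝ => ε ^ 2) (𝓝[≠] 0) (𝓝[>] 0) := by
    refine tendsto_nhdsWithin_iff.2 ⟨?_, ?_⟩
    · exact ((continuous_pow 2).tendsto' 0 0 (by simp)).mono_left nhdsWithin_le_nhds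
    · filter_upwards [self_mem_nhdsWithin] with ε hε using sq_pos_of_ne_zero hε
  have hdiv := hsq.inv_tendsto_nhdsGT_zero.const_mul_atTop_of_neg (neg_lt_zero.2 hγ)
  exact Real.tendsto_exp_atBot.comp hdiv

lemma asympEquivalent_of_subset [IsFiniteMeasure P] (hCD : ∀ ε, C ε ⊆ D ε)
    (hpos : ∀ᶠ ε in 𝓝[>] (0 : ℝ), 0 < P.real (D ε))
    (hlim : Tendsto (fun ε => P.real (D ε \ C ε) / P.real (D ε)) (𝓝[>] 0) (𝓝 0)) :
    AsympEquivalent P C D := by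
  have hratio : Tendsto (fun ε => P.real (C ε) / P.real (D ε)) (𝓝[>] 0) (𝓝 1) := by
    refine tendsto_of_tendsto_of_tendsto_of_le_of_le' (by simpa using hlim.const_sub 1)
      tendsto_const_nhds ?_ ?_
    · filter_upwards [hpos] with ε hε
      have hunion := measureReal_union_le (μ := P) (C ε) (D ε \ C ε)
      rw [union_sdiff_cancel (hCD ε)] at hunion
      rw [one_sub_div hε.ne']
      gcongr
      linarith
    · exact .of_forall fun ε => div_le_one_of_le₀ (measureReal_mono (hCD ε)) measureReal_nonneg
  refine ⟨?_, ?_⟩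
  · filter_upwards [hpos, hratio.eventually_const_lt one_pos] with ε hε hCε
    exact (ENNReal.toReal_pos_iff.1 ((div_pos_iff_of_pos_right hε).1 hCε)).1
  · have hquot := hlim.div hratio one_ne_zero
    rw [zero_div] at hquot
    refine hquot.congr' ?_
    filter_upwards [hpos] with ε hε
    rw [Pi.div_apply, div_div_div_cancel_right₀ hε.ne', Set.symmDiff_def,
      sdiff_eq_empty.2 (hCD ε), empty_union]
    rfl

lemma asympEquivalent_of_exp_bounds [IsFiniteMeasure P] {K M α β : ℝ} (hCD : ∀ ε, C ε ⊆ D ε)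
    (hK : 0 < K) (hβα : β < α)
    (hupper : ∀ᶠ ε in 𝓝[>] (0 : ℝ), P.real (D ε \ C ε) ≤ M * Real.exp (-α / ε ^ 2))
    (hlower : ∀ᶠ ε in 𝓝[>] (0 : ℝ), K * Real.exp (-β / ε ^ 2) ≤ P.real (D ε)) :
    AsympEquivalent P C D := by
  have hbound : Tendsto (fun ε : ℝ => M / K * Real.exp (-(α - β) / ε ^ 2)) (𝓝[>] 0) (𝓝 0) := by
    have hexp := tendsto_exp_neg_div_sq_nhdsNE_zero (sub_pos.2 hβα)
    simpa using (hexp.mono_left (nhdsGT_le_nhdsNE 0)).const_mul (M / K)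
  refine asympEquivalent_of_subset hCD ?_ (squeeze_zero' (.of_forall fun ε => by positivity) ?_
    hbound)
  · filter_upwards [hlower] with ε hε using lt_of_lt_of_le (by positivity) hε
  · filter_upwards [hupper, hlower] with ε hu hl
    calc P.real (D ε \ C ε) / P.real (D ε)
      _ ≤ M * Real.exp (-α / ε ^ 2) / (K * Real.exp (-β / ε ^ 2)) := by
        gcongr
        exact measureReal_nonneg.trans hu
      _ = M / K * Real.exp (-(α - β) / ε ^ 2) := by
        rw [mul_div_mul_comm, ← Real.exp_sub]
        ring_nf

end Asymptotics

theorem exit_at_zero_equivalent_to_hitting_zero_general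
    {Ω : Type*} [MeasurableSpace Ω] (P : Measure Ω) [IsProbabilityMeasure P]
    (B : ℝ → Ω → ℝ) (hB : IsBrownianMotion P B)
    (lam qm x₀ : ℝ) (hlam : 0 < lam) (hqm : qm < x₀) (hx₀ : x₀ ≤ 0) :
    AsympEquivalent P
      (fun ε => {ω | (exitTimes (ouPath lam x₀ ε (B · ω)) qm 0).Nonempty ∧
        ouPath lam x₀ ε (B · ω) (sInf (exitTimes (ouPath lam x₀ ε (B · ω)) qm 0)) = 0})
      (fun ε => {ω | ∃ t, 0 ≤ t ∧ ouPath lam x₀ ε (B · ω) t = 0}) := by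
  obtain ⟨d, hd, hdq⟩ := exists_between (neg_lt_neg hqm)
  have hd0 : 0 ≤ d := (neg_nonneg.2 hx₀).trans hd.le
  refine asympEquivalent_of_exp_bounds (K := (d + x₀) * (√(Real.pi / lam))⁻¹) (M := 2)
    (α := lam * qm ^ 2) (β := lam * d ^ 2)
    (fun ε ω hω => ⟨_, Real.sInf_nonneg fun _ ht => ht.1, hω.2⟩)
    (mul_pos (by linarith) (by positivity)) ?_ ?_ ?_
  · rw [← neg_sq qm]
    gcongr
  · filter_upwards [self_mem_nhdsWithin] with ε hε
    exact measureReal_hit_zero_diff_exit_at_zero_le hB hlam (hqm.trans_le hx₀) hε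
  · filter_upwards [Ioc_mem_nhdsGT one_pos] with ε hε
    exact le_measureReal_hit_zero hB hlam hx₀ hd.le hε.1 hε.2

/-- Lemma 3: for `λ > 0` and `q₋ < x₀ < 0`, the families
`C_ε = {τ_ε < ∞, X_ε(τ_ε) = 0}` and `D_ε = {∃ t ≥ 0, X_ε(t) = 0}` are asymptotically
equivalent as `ε → 0⁺`. -/
theorem exit_at_zero_equivalent_to_hitting_zero
    {Ω : Type*} [MeasurableSpace Ω] (P : Measure Ω) [IsProbabilityMeasure P]
    (hPc : P.IsComplete)
    (B : ℝ → Ω → ℝ) (hB : IsBrownianMotion P B)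
    (lam qm x₀ : ℝ) (hlam : 0 < lam) (hqm : qm < x₀) (hx₀ : x₀ < 0)
    (X : ℝ → ℝ → Ω → ℝ)
    (hX : ∀ ε t ω, X ε t ω
      = Real.exp (lam * t) * (x₀ + ε * B ((1 - Real.exp (-(2 * lam * t))) / (2 * lam)) ω))
    (τ : ℝ → Ω → ℝ)
    (hτ : ∀ ε ω, τ ε ω = sInf {t | 0 ≤ t ∧ (X ε t ω = qm ∨ X ε t ω = 0)})
    (C D : ℝ → Set Ω)
    (hC : ∀ ε, C ε
      = {ω | {t | 0 ≤ t ∧ (X ε t ω = qm ∨ X ε t ω = 0)}.Nonempty ∧ X ε (τ ε ω) ω = 0})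
    (hD : ∀ ε, D ε = {ω | ∃ t : ℝ, 0 ≤ t ∧ X ε t ω = 0}) :
    AsympEquivalent P C D := by
  obtain rfl : C = _ := funext hC
  obtain rfl : D = _ := funext hD
  simp only [hτ, hX]
  exact exit_at_zero_equivalent_to_hitting_zero_general P B hB lam qm x₀ hlam hqm hx₀.le
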